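/- The class 𝒜 of subsets of X^ω having the Automatic Baire property is not closed under countable union: there exists a countable family (F_i)_{i∈ℕ} of subsets of X^ω, each having the Automatic Baire property, whose union ⋃_{i∈ℕ} F_i does not have the Automatic Baire property. -/

import Mathlib

open Set MeasureTheory Computability

namespace AutoBaire

/-- The Cantor topology on the space of ω-words over `X`:
the product of the discrete topology on `X`. -/
def cantorTop (X : Type) : TopologicalSpace (ℕ → X) :=
  @Pi.topologicalSpace ℕ (fun _ => X) (fun _ => ⊥)

/-- The Borel σ-algebra of the Cantor space. -/
def cantorBorel (X : Type) : MeasurableSpace (ℕ → X) :=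
  @borel (ℕ → X) (cantorTop X)

variable {X : Type}

/-- Concatenation `w·ξ` of a finite word with an ω-word. -/
def wcat (w : List X) (ξ : ℕ → X) : ℕ → X :=
  Stream'.appendStream' w ξ

/-- The ball (cylinder) `w·X^ω`. -/
def cyl (w : List X) : Set (ℕ → X) := {ξ | ∃ η : ℕ → X, ξ = wcat w η}

/-- The ω-language `W·A` for a language `W` and an ω-language `A`. -/
def catOmega (W : Language X) (A : Set (ℕ → X)) : Set (ℕ → X) :=
  {ξ | ∃ w ∈ W, ∃ η ∈ A, ξ = wcat w η}

/-- `V^ω`: the set of ω-words that are infinite concatenations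
`v₁·v₂·⋯` of non-empty words `vᵢ ∈ V`. -/
def omegaPow (V : Language X) : Set (ℕ → X) :=
  {ξ | ∃ f : ℕ → List X, (∀ i, f i ∈ V ∧ f i ≠ []) ∧
    ∀ k, ξ ∈ cyl (((List.range k).map f).flatten)}

/-- Regular languages: those obtained from finite languages via the operations
union, concatenation and star. -/
inductive IsRegLang : Language X → Prop
  | finite (W : Language X) : (W : Set (List X)).Finite → IsRegLang W
  | union (W V : Language X) : IsRegLang W → IsRegLang V → IsRegLang (W + V)
  | concat (W V : Language X) : IsRegLang W → IsRegLang V → IsRegLang (W * V)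
  | star (W : Language X) : IsRegLang W → IsRegLang (W∗)

/-- Regular ω-languages: finite unions `⋃ᵢ Wᵢ·Vᵢ^ω` with `Wᵢ, Vᵢ` regular. -/
def IsRegOmega (F : Set (ℕ → X)) : Prop :=
  ∃ (n : ℕ) (W V : Fin n → Language X),
    (∀ i, IsRegLang (W i) ∧ IsRegLang (V i)) ∧
    F = ⋃ i, catOmega (W i) (omegaPow (V i))

/-- `X*·w·X^ω`: the set of ω-words containing `w` as an infix. -/
def infixOcc (w : List X) : Set (ℕ → X) :=
  {ξ | ∃ u : List X, ξ ∈ cyl (u ++ w)}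

/-- An ω-word is disjunctive if every finite word occurs in it as an infix. -/
def Disjunctive (ξ : ℕ → X) : Prop := ∀ w : List X, ξ ∈ infixOcc w

/-- Ultimately periodic ω-words: `ξ = w·v·v·v·⋯` with `v ≠ e`. -/
def UltPeriodic (ξ : ℕ → X) : Prop :=
  ∃ (w v : List X) (h : v ≠ []), ξ = wcat w (Stream'.cycle v h)

/-- The Automatic Baire property: `F Δ E ⊆ F'` for some regular open
ω-language `E` and some regular ω-language `F'` of first Baire category. -/
def HasABP (F : Set (ℕ → X)) : Prop :=
  ∃ E F' : Set (ℕ → X),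
    IsRegOmega E ∧ @IsOpen _ (cantorTop X) E ∧
    IsRegOmega F' ∧ @IsMeagre _ (cantorTop X) F' ∧
    symmDiff F E ⊆ F'

/-- The measure is finite and non-null: `0 < μ(X^ω) < ∞`. -/
def FiniteNonNull (μ : @MeasureTheory.Measure (ℕ → X) (cantorBorel X)) : Prop :=
  0 < μ Set.univ ∧ μ Set.univ < ⊤

/-- `supp(μ) = X^ω`: every non-empty open set has positive measure. -/
def FullSupport (μ : @MeasureTheory.Measure (ℕ → X) (cantorBorel X)) : Prop :=
  ∀ U : Set (ℕ → X), @IsOpen _ (cantorTop X) U → U.Nonempty → 0 < μ U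

/-- The balance condition: there is `c > 0` such that for all `w ∈ X*`, `x ∈ X`
either `μ(wx·X^ω) = 0` or `c·μ(w·X^ω) ≤ μ(wx·X^ω)`. -/
def Balanced (μ : @MeasureTheory.Measure (ℕ → X) (cantorBorel X)) : Prop :=
  ∃ c : ENNReal, 0 < c ∧ ∀ (w : List X) (x : X),
    μ (cyl (w ++ [x])) = 0 ∨ c * μ (cyl w) ≤ μ (cyl (w ++ [x]))


theorem fq_finite (W : Language X) (h : (W : Set (List X)).Finite) :
    (Set.range W.leftQuotient).Finite := by
  have hT : (⋃ w ∈ (W : Set (List X)), {s | s ∈ w.tails}).Finite :=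
    h.biUnion (fun w _ => List.finite_toSet _)
  refine (hT.finite_subsets).subset ?_
  rintro _ ⟨u, rfl⟩ y hy
  have hy' : u ++ y ∈ W := hy
  simp only [Set.mem_iUnion]
  exact ⟨u ++ y, hy', by simp⟩

theorem fq_union (W V : Language X) (hW : (Set.range W.leftQuotient).Finite)
    (hV : (Set.range V.leftQuotient).Finite) : (Set.range (W + V).leftQuotient).Finite := by
  refine (Set.Finite.image2 (fun A B => A + B) hW hV).subset ?_
  rintro _ ⟨u, rfl⟩
  exact ⟨_, ⟨u, rfl⟩, _, ⟨u, rfl⟩, rfl⟩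

theorem fq_mul (W V : Language X) (hW : (Set.range W.leftQuotient).Finite)
    (hV : (Set.range V.leftQuotient).Finite) : (Set.range (W * V).leftQuotient).Finite := by
  refine (Set.Finite.image2 (fun (A : Language X) (S : Set (Language X)) =>
    A * V + (show Language X from {y | ∃ Q ∈ S, y ∈ Q})) hW hV.finite_subsets).subset ?_
  rintro _ ⟨u, rfl⟩
  refine ⟨_, ⟨u, rfl⟩, {Q | ∃ c ∈ W, ∃ r, u = c ++ r ∧ Q = V.leftQuotient r}, ?_, ?_⟩
  · rintro _ ⟨c, hc, r, h, rfl⟩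
    exact ⟨r, rfl⟩
  · ext y
    simp only [Language.mem_add, Language.mem_leftQuotient, Language.mem_mul]
    constructor
    · rintro (⟨a, ha, b, hb, rfl⟩ | ⟨_, ⟨c, hc, r, rfl, rfl⟩, hy⟩)
      · exact ⟨u ++ a, ha, b, hb, by simp⟩
      · exact ⟨c, hc, r ++ y, hy, by simp⟩
    · rintro ⟨a, ha, b, hb, h⟩
      rcases List.append_eq_append_iff.1 h with ⟨r, h1, h2⟩ | ⟨r, h1, h2⟩
      · right
        refine ⟨_, ⟨a, ha, r, h1, rfl⟩, ?_⟩
        change r ++ y ∈ V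
        rw [← h2]; exact hb
      · left
        subst h1
        exact ⟨r, ha, b, hb, h2.symm⟩

theorem kstar_append {V : Language X} {a b : List X} (ha : a ∈ V∗) (hb : b ∈ V∗) :
    a ++ b ∈ V∗ := by
  obtain ⟨S, rfl, hS⟩ := ha
  obtain ⟨T, rfl, hT⟩ := hb
  refine ⟨S ++ T, by simp, ?_⟩
  intro y hy
  rcases List.mem_append.1 hy with h | h
  · exact hS y h
  · exact hT y h

theorem mem_kstar_self {V : Language X} {a : List X} (ha : a ∈ V) : a ∈ V∗ :=
  ⟨[a], by simp, by simpa using ha⟩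

theorem kstar_split (V : Language X) (S : List (List X)) : ∀ (u y : List X), (∀ s ∈ S, s ∈ V) →
    u ≠ [] → u ++ y = S.flatten →
    ∃ c ∈ V∗, ∃ r q t, u = c ++ r ∧ y = q ++ t ∧ r ++ q ∈ V ∧ t ∈ V∗ := by
  induction S with
  | nil => intro u y _ hu h; simp at h; exact absurd h.1 hu
  | cons s S ih =>
    intro u y hS hu h
    have hs : s ∈ V := hS s (by simp)
    have hS' : ∀ s ∈ S, s ∈ V := fun x hx => hS x (by simp [hx])
    have hfl : S.flatten ∈ V∗ := ⟨S, rfl, hS'⟩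
    rw [List.flatten_cons] at h
    rcases List.append_eq_append_iff.1 h with ⟨a, h1, h2⟩ | ⟨a, h1, h2⟩
    · exact ⟨[], Language.nil_mem_kstar _, u, a, S.flatten, rfl, h2, h1 ▸ hs, hfl⟩
    · by_cases ha : a = []
      · subst ha
        refine ⟨[], Language.nil_mem_kstar _, u, [], y, rfl, rfl, ?_, ?_⟩
        · rw [h1]; simpa using hs
        · have h3 : S.flatten = y := by simpa using h2
          exact h3 ▸ hfl
      · obtain ⟨c, hc, r, q, t, e1, e2, e3, e4⟩ := ih a y hS' ha h2.symm
        exact ⟨s ++ c, kstar_append (mem_kstar_self hs) hc, r, q, t, by rw [h1, e1]; simp, e2, e3, e4⟩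

theorem fq_star (V : Language X)
    (hV : (Set.range V.leftQuotient).Finite) : (Set.range (V∗).leftQuotient).Finite := by
  refine ((hV.finite_subsets.image (fun (S : Set (Language X)) =>
    (show Language X from {y | ∃ Q ∈ S, y ∈ Q * V∗}))).insert (V∗)).subset ?_
  rintro _ ⟨u, rfl⟩
  by_cases hu : u = []
  · subst hu; left; rfl
  right
  refine ⟨{Q | ∃ c ∈ V∗, ∃ r, u = c ++ r ∧ Q = V.leftQuotient r}, ?_, ?_⟩
  · rintro _ ⟨c, hc, r, h, rfl⟩
    exact ⟨r, rfl⟩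
  · ext y
    constructor
    · rintro ⟨_, ⟨c, hc, r, rfl, rfl⟩, hy⟩
      obtain ⟨q, hq, t, ht, rfl⟩ := Language.mem_mul.1 hy
      have hq' : r ++ q ∈ V := hq
      change c ++ r ++ (q ++ t) ∈ (V∗)
      have := kstar_append hc (kstar_append (mem_kstar_self hq') ht)
      simpa using this
    · intro hy
      obtain ⟨S, hS, hSV⟩ : u ++ y ∈ V∗ := hy
      obtain ⟨c, hc, r, q, t, e1, e2, e3, e4⟩ := kstar_split V S u y hSV hu hS
      exact ⟨_, ⟨c, hc, r, e1, rfl⟩, Language.mem_mul.2 ⟨q, e3, t, e4, e2.symm⟩⟩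

theorem fq_reg {V : Language X} (h : IsRegLang V) : (Set.range V.leftQuotient).Finite := by
  induction h with
  | finite W h => exact fq_finite W h
  | union W V _ _ h1 h2 => exact fq_union W V h1 h2
  | concat W V _ _ h1 h2 => exact fq_mul W V h1 h2
  | star W _ h => exact fq_star W h

theorem killer (L : Language X) (hL : (Set.range L.leftQuotient).Finite)
    (hk : ∀ p : List X, ∃ w : List X, ∀ s, p ++ w ++ s ∉ L) :
    ∃ w : List X, ∀ p s, p ++ w ++ s ∉ L := by
  have key : ∀ T : Set (Language X), T.Finite →
      ∃ w : List X, ∀ p, L.leftQuotient p ∈ T → ∀ s, p ++ w ++ s ∉ L := by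
    intro T hT
    induction T, hT using Set.Finite.induction_on with
    | empty => exact ⟨[], by simp⟩
    | @insert Q T _ _ ih =>
      obtain ⟨w, hw⟩ := ih
      by_cases hQ : ∃ p0, L.leftQuotient p0 = Q
      · obtain ⟨p0, rfl⟩ := hQ
        obtain ⟨w', hw'⟩ := hk (p0 ++ w)
        refine ⟨w ++ w', ?_⟩
        rintro p (hp | hp) s hs
        · have : w ++ w' ++ s ∈ L.leftQuotient p := by simpa using hs
          rw [hp] at this
          apply hw' s
          simpa using this
        · apply hw p hp (w' ++ s)
          simpa using hs
      · refine ⟨w, ?_⟩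
        rintro p (hp | hp) s
        · exact absurd ⟨p, hp⟩ hQ
        · exact hw p hp s
  obtain ⟨w, hw⟩ := key _ hL
  exact ⟨w, fun p s => hw p ⟨p, rfl⟩ s⟩

/-! words and omega-words -/

theorem wcat_append (a b : List X) (ξ : ℕ → X) : wcat (a ++ b) ξ = wcat a (wcat b ξ) :=
  Stream'.append_append_stream a b ξ

theorem wcat_cons_zero (a : X) (l : List X) (ξ : ℕ → X) : wcat (a :: l) ξ 0 = a := rfl

theorem wcat_cons_succ (a : X) (l : List X) (ξ : ℕ → X) (n : ℕ) :
    wcat (a :: l) ξ (n + 1) = wcat l ξ n := rfl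

theorem wcat_lt (l : List X) (ξ : ℕ → X) : ∀ (i : ℕ) (h : i < l.length), wcat l ξ i = l[i] := by
  induction l with
  | nil => intro i h; simp at h
  | cons a l ih =>
    intro i h
    cases i with
    | zero => rfl
    | succ i => rw [wcat_cons_succ, ih i (by simpa using h)]; rfl

theorem wcat_add (l : List X) (ξ : ℕ → X) : ∀ (i : ℕ), wcat l ξ (l.length + i) = ξ i := by
  induction l with
  | nil => intro i; simp; rfl
  | cons a l ih =>
    intro i
    have : (a :: l).length + i = (l.length + i) + 1 := by simp; omega
    rw [this, wcat_cons_succ, ih]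

theorem mem_cyl_iff (l : List X) (ξ : ℕ → X) :
    ξ ∈ cyl l ↔ ∀ (i : ℕ) (h : i < l.length), ξ i = l[i] := by
  constructor
  · rintro ⟨η, rfl⟩ i h
    exact wcat_lt l η i h
  · intro h
    refine ⟨fun i => ξ (l.length + i), ?_⟩
    funext i
    by_cases hi : i < l.length
    · rw [wcat_lt l _ i hi, h i hi]
    · obtain ⟨k, rfl⟩ := Nat.exists_eq_add_of_le (not_lt.1 hi)
      rw [wcat_add]

theorem wcat_inj (l : List X) {ξ η : ℕ → X} (h : wcat l ξ = wcat l η) : ξ = η := by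
  funext i
  rw [← wcat_add l ξ i, h, wcat_add]

theorem wcat_mem_cyl {a b : List X} {η : ℕ → X} : wcat a η ∈ cyl (a ++ b) ↔ η ∈ cyl b := by
  constructor
  · rintro ⟨ζ, h⟩
    rw [wcat_append] at h
    exact ⟨ζ, wcat_inj a h⟩
  · rintro ⟨ζ, rfl⟩
    exact ⟨ζ, (wcat_append _ _ _).symm⟩

theorem cyl_mono {a b : List X} : cyl (a ++ b) ⊆ cyl a := by
  rintro _ ⟨ζ, rfl⟩
  exact ⟨_, wcat_append _ _ _⟩

theorem cyl_prefix {a b : List X} {ξ : ℕ → X} (ha : ξ ∈ cyl a) (hb : ξ ∈ cyl b)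
    (h : a.length ≤ b.length) : a <+: b := by
  rw [mem_cyl_iff] at ha hb
  rw [List.prefix_iff_eq_take]
  apply List.ext_getElem
  · simp [h]
  · intro i h1 h2
    rw [List.getElem_take, ← ha i h1, ← hb i (by omega)]

/-- the first k blocks -/
def blk (f : ℕ → List X) (k : ℕ) : List X := ((List.range k).map f).flatten

theorem blk_succ (f : ℕ → List X) (k : ℕ) : blk f (k + 1) = blk f k ++ f k := by
  simp [blk, List.range_succ]

theorem blk_succ' (f : ℕ → List X) (k : ℕ) : blk f (k + 1) = f 0 ++ blk (fun i => f (i + 1)) k := by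
  simp [blk, List.range_succ_eq_map, Function.comp_def]

theorem blk_zero (f : ℕ → List X) : blk f 0 = [] := rfl

theorem blk_length (f : ℕ → List X) (hf : ∀ i, f i ≠ []) (k : ℕ) : k ≤ (blk f k).length := by
  induction k with
  | zero => simp
  | succ k ih =>
    rw [blk_succ, List.length_append]
    have := List.length_pos_iff.2 (hf k)
    omega

theorem blk_mono (f : ℕ → List X) {k m : ℕ} (h : k ≤ m) : blk f k <+: blk f m := by
  induction m, h using Nat.le_induction with
  | base => exact List.prefix_rfl
  | succ m _ ih => rw [blk_succ]; exact ih.trans (List.prefix_append _ _)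

theorem blk_limit (f : ℕ → List X) (hf : ∀ i, f i ≠ []) : ∃ ξ : ℕ → X, ∀ k, ξ ∈ cyl (blk f k) := by
  refine ⟨fun i => (blk f (i + 1))[i]'(blk_length f hf (i + 1)), fun k => ?_⟩
  rw [mem_cyl_iff]
  intro i hi
  rcases le_total (i + 1) k with h | h
  · exact (blk_mono f h).getElem _
  · exact ((blk_mono f h).getElem _).symm

theorem blk_kstar {V : Language X} (f : ℕ → List X) (hf : ∀ i, f i ∈ V) (k : ℕ) : blk f k ∈ V∗ := by
  induction k with
  | zero => exact Language.nil_mem_kstar _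
  | succ k ih => rw [blk_succ]; exact kstar_append ih (mem_kstar_self (hf k))

theorem omega_dest {V : Language X} {ξ : ℕ → X} (h : ξ ∈ omegaPow V) :
    ∃ v ∈ V, v ≠ [] ∧ ∃ η ∈ omegaPow V, ξ = wcat v η := by
  obtain ⟨f, hf, hk⟩ := h
  obtain ⟨η, hη⟩ := hk 1
  simp at hη
  refine ⟨f 0, (hf 0).1, (hf 0).2, η, ⟨fun i => f (i + 1), fun i => hf _, fun k => ?_⟩, hη⟩
  have := hk (k + 1)
  change ξ ∈ cyl (blk f (k + 1)) at this
  rw [blk_succ', hη, wcat_mem_cyl] at this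
  exact this

theorem omega_coind {V : Language X} (S : Set (ℕ → X))
    (hS : ∀ ξ ∈ S, ∃ v ∈ V, v ≠ [] ∧ ∃ η ∈ S, ξ = wcat v η) : S ⊆ omegaPow V := by
  intro ξ hξ
  choose! v hv hv0 t ht he using hS
  have hm : ∀ k, t^[k] ξ ∈ S := by
    intro k
    induction k with
    | zero => exact hξ
    | succ k ih => rw [Function.iterate_succ_apply']; exact ht _ ih
  refine ⟨fun i => v (t^[i] ξ), fun i => ⟨hv _ (hm i), hv0 _ (hm i)⟩, fun k => ?_⟩
  refine ⟨t^[k] ξ, ?_⟩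
  change ξ = wcat (blk (fun i => v (t^[i] ξ)) k) (t^[k] ξ)
  induction k with
  | zero => rfl
  | succ k ih =>
    rw [blk_succ, wcat_append, Function.iterate_succ_apply', ← he _ (hm k)]
    exact ih

theorem omega_kstar (V : Language X) : omegaPow (V∗) ⊆ omegaPow V := by
  have hsub : {ξ | ∃ u ∈ V∗, ∃ η ∈ omegaPow (V∗), ξ = wcat u η} ⊆ omegaPow V := by
    apply omega_coind
    have aux : ∀ u ∈ V∗, u ≠ [] → ∀ η ∈ omegaPow (V∗), ∃ v ∈ V, v ≠ [] ∧
        ∃ ζ ∈ {ξ | ∃ u ∈ V∗, ∃ η ∈ omegaPow (V∗), ξ = wcat u η}, wcat u η = wcat v ζ := by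
      intro u hu hu0 η hη
      obtain ⟨S, rfl, hS⟩ := Language.mem_kstar_iff_exists_nonempty.1 hu
      cases S with
      | nil => simp at hu0
      | cons s S =>
        refine ⟨s, (hS s (by simp)).1, (hS s (by simp)).2, wcat S.flatten η,
          ⟨S.flatten, ⟨S, rfl, fun y hy => (hS y (by simp [hy])).1⟩, η, hη, rfl⟩, ?_⟩
        rw [List.flatten_cons, wcat_append]
    rintro ξ ⟨u, hu, η, hη, rfl⟩
    by_cases hu0 : u = []
    · subst hu0
      obtain ⟨v, hv, hv0, ζ, hζ, rfl⟩ := omega_dest hη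
      exact aux v hv hv0 ζ hζ
    · exact aux u hu hu0 η hη
  intro ξ hξ
  exact hsub ⟨[], Language.nil_mem_kstar _, ξ, hξ, rfl⟩

/-! topology -/

theorem isOpen_cyl (l : List X) : @IsOpen _ (cantorTop X) (cyl l) := by
  let : TopologicalSpace X := ⊥
  have : DiscreteTopology X := ⟨rfl⟩
  change IsOpen (cyl l)
  have : cyl l = ⋂ i : Fin l.length, {ξ : ℕ → X | ξ i = l[i]} := by
    ext ξ
    rw [mem_cyl_iff]
    simp only [Set.mem_iInter, Set.mem_ofPred_eq]
    exact ⟨fun h i => h i i.2, fun h i hi => h ⟨i, hi⟩⟩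
  rw [this]
  refine isOpen_iInter_of_finite fun i => ?_
  have h := (isOpen_discrete ({l[i]} : Set X)).preimage
    (continuous_apply (A := fun _ : ℕ => X) (i : ℕ))
  exact h

theorem open_cyl (U : Set (ℕ → X)) (hU : @IsOpen _ (cantorTop X) U) (ξ : ℕ → X) (h : ξ ∈ U) :
    ∃ N, ∀ η : ℕ → X, (∀ i < N, η i = ξ i) → η ∈ U := by
  let : TopologicalSpace X := ⊥
  have : DiscreteTopology X := ⟨rfl⟩
  change IsOpen U at hU
  obtain ⟨I, u, hu, hsub⟩ := isOpen_pi_iff.1 hU ξ h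
  refine ⟨I.sup id + 1, fun η hη => hsub ?_⟩
  intro i hi
  rw [hη i (Nat.lt_succ_of_le (Finset.le_sup (f := id) hi))]
  exact (hu i hi).2

theorem dense_extend (U : Set (ℕ → X)) (hU : @IsOpen _ (cantorTop X) U)
    (hd : @Dense _ (cantorTop X) U) (x : X) (c : List X) :
    ∃ w, w ≠ [] ∧ cyl (c ++ w) ⊆ U := by
  obtain ⟨ξ, hξc, hξ⟩ := (@Dense.inter_open_nonempty _ (cantorTop X) U hd) (cyl c) (isOpen_cyl c)
    ⟨_, fun _ => x, rfl⟩
  obtain ⟨N, hN⟩ := open_cyl U hU ξ hξ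
  obtain ⟨η, rfl⟩ := hξc
  refine ⟨List.ofFn (fun i : Fin (N + 1) => η i), by simp, ?_⟩
  rintro _ ⟨ζ, rfl⟩
  apply hN
  intro i hi
  rw [wcat_append]
  by_cases h : i < c.length
  · rw [wcat_lt _ _ _ h, wcat_lt _ _ _ h]
  · obtain ⟨k, rfl⟩ := Nat.exists_eq_add_of_le (not_lt.1 h)
    rw [wcat_add, wcat_add, wcat_lt _ _ k (by simp; omega), List.getElem_ofFn]

theorem meagre_subsingleton [Nontrivial X] (S : Set (ℕ → X)) (hS : S.Subsingleton) :
    @IsMeagre _ (cantorTop X) S := by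
  let : TopologicalSpace X := ⊥
  have : DiscreteTopology X := ⟨rfl⟩
  change IsMeagre S
  apply IsNowhereDense.isMeagre
  rw [IsClosed.isNowhereDense_iff hS.isClosed]
  by_contra hne
  obtain ⟨ξ, hξ⟩ := Set.nonempty_iff_ne_empty.2 hne
  obtain ⟨N, hN⟩ := open_cyl (interior S) (isOpen_interior (s := S)) ξ hξ
  obtain ⟨y, hy⟩ := exists_ne (ξ N)
  have h1 := hN (Function.update ξ N y) (fun i hi => by simp [Function.update_of_ne hi.ne])
  have h2 := congrFun (hS (interior_subset h1) (interior_subset hξ)) N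
  simp at h2
  exact hy h2

theorem baire_cantor (X : Type) [Finite X] : @BaireSpace (ℕ → X) (cantorTop X) := by
  let : TopologicalSpace X := ⊥
  have : DiscreteTopology X := ⟨rfl⟩
  change BaireSpace (ℕ → X)
  infer_instance

theorem nonmeagre_omega [Finite X] (x : X) (W V : Language X) (w0 : List X) (hw0 : w0 ∈ W) (p : List X)
    (hp : ∀ w, ∃ s, p ++ w ++ s ∈ V∗) (F : Set (ℕ → X)) (hF : @IsMeagre _ (cantorTop X) F)
    (hsub : catOmega W (omegaPow V) ⊆ F) : False := by
  let : TopologicalSpace (ℕ → X) := cantorTop X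
  have : BaireSpace (ℕ → X) := baire_cantor X
  obtain ⟨t, htF, htG, htd⟩ := mem_residual.1 (show Fᶜ ∈ residual (ℕ → X) from hF)
  obtain ⟨U, hU, rfl⟩ := htG.eq_iInter_nat
  have hUd : ∀ n, Dense (U n) := fun n => htd.mono (Set.iInter_subset _ n)
  have step : ∀ (k : ℕ) (c : List X), ∃ d, d ∈ V∗ ∧ d ≠ [] ∧ cyl (w0 ++ c ++ d) ⊆ U k := by
    intro k c
    obtain ⟨w, hw, hwU⟩ := dense_extend (U k) (hU k) (hUd k) x (w0 ++ c ++ p)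
    obtain ⟨s, hs⟩ := hp w
    refine ⟨_, hs, by simp [hw], ?_⟩
    refine Set.Subset.trans ?_ hwU
    have : w0 ++ c ++ (p ++ w ++ s) = (w0 ++ c ++ p ++ w) ++ s := by simp
    rw [this]
    exact cyl_mono
  choose d hdV hd0 hdU using step
  let c : ℕ → List X := fun k => Nat.rec [] (fun k c => c ++ d k c) k
  let f : ℕ → List X := fun k => d k (c k)
  have hc : ∀ k, blk f k = c k := by
    intro k
    induction k with
    | zero => rfl
    | succ k ih => rw [blk_succ, ih]
  obtain ⟨η, hη⟩ := blk_limit f (fun k => hd0 _ _)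
  have hηV : η ∈ omegaPow V := omega_kstar V ⟨f, fun i => ⟨hdV _ _, hd0 _ _⟩, hη⟩
  have hin : wcat w0 η ∈ F := hsub ⟨w0, hw0, η, hηV, rfl⟩
  refine htF (Set.mem_iInter.2 fun k => ?_) hin
  apply hdU k (c k)
  rw [List.append_assoc, wcat_mem_cyl]
  have := hη (k + 1)
  rwa [blk_succ, hc k] at this

theorem infix_of_per (W V : Language X) (w : List X) (hw : w ≠ []) (ξ : ℕ → X)
    (hξ : ∀ k, ξ ∈ cyl (blk (fun _ => w) k)) (h : ξ ∈ catOmega W (omegaPow V)) :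
    ∃ r t, r ++ w ++ t ∈ V∗ := by
  obtain ⟨w0, hw0, η, ⟨f, hf, hk⟩, rfl⟩ := h
  have hk' : ∀ k, η ∈ cyl (blk f k) := hk
  have hlen := blk_length f (fun i => (hf i).2)
  have hlw := blk_length (fun _ => w) (fun _ => hw)
  obtain ⟨r, hr⟩ := cyl_prefix (a := w0) ⟨η, rfl⟩ (hξ w0.length) (hlw _)
  have h1 := hξ (w0.length + 1)
  rw [blk_succ, ← hr, List.append_assoc, wcat_mem_cyl] at h1
  obtain ⟨t, ht⟩ := cyl_prefix h1 (hk' (r ++ w).length) (hlen _)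
  exact ⟨r, t, ht ▸ blk_kstar f (fun i => (hf i).1) _⟩

theorem per_not_all [Finite X] [Nontrivial X] (F : Set (ℕ → X)) (hreg : IsRegOmega F)
    (hF : @IsMeagre _ (cantorTop X) F) (hall : ∀ w : List X, omegaPow ({w} : Set (List X)) ⊆ F) :
    False := by
  obtain ⟨n, W, V, hWV, rfl⟩ := hreg
  obtain ⟨x, -, -⟩ := exists_pair_ne X
  have hb : ∀ j, ∃ w : List X, (∃ w0, w0 ∈ W j) → ∀ p s, p ++ w ++ s ∉ (V j)∗ := by
    intro j
    by_cases hW : ∃ w0, w0 ∈ W j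
    · obtain ⟨w0, hw0⟩ := hW
      obtain ⟨w, hw⟩ := killer ((V j)∗) (fq_star _ (fq_reg (hWV j).2)) (by
        by_contra hcon
        push Not at hcon
        obtain ⟨p, hp⟩ := hcon
        exact nonmeagre_omega x (W j) (V j) w0 hw0 p hp _ hF
          (Set.subset_iUnion (fun i => catOmega (W i) (omegaPow (V i))) j))
      exact ⟨w, fun _ => hw⟩
    · exact ⟨[], fun h => absurd h hW⟩
  choose b hb using hb
  let w := (List.ofFn b).flatten ++ [x]
  have hw : w ≠ [] := by simp [w]
  obtain ⟨ξ, hξ⟩ := blk_limit (fun _ => w) (fun _ => hw)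
  have hmem := hall w ⟨fun _ => w, fun _ => ⟨rfl, hw⟩, hξ⟩
  obtain ⟨j, hj⟩ := Set.mem_iUnion.1 hmem
  obtain ⟨r, t, hrt⟩ := infix_of_per _ _ w hw ξ hξ hj
  obtain ⟨w0, hw0, -⟩ := hj
  have hinf : b j <:+: (List.ofFn b).flatten :=
    List.infix_of_mem_flatten (by simp [List.mem_ofFn])
  obtain ⟨a, c, hac⟩ := hinf
  apply hb j ⟨w0, hw0⟩ (r ++ a) (c ++ [x] ++ t)
  have : r ++ w ++ t = r ++ a ++ b j ++ (c ++ [x] ++ t) := by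
    simp only [w, ← hac]; simp
  rwa [← this]

theorem per_subsingleton (w : List X) : (omegaPow ({w} : Set (List X))).Subsingleton := by
  have aux : ∀ ξ ∈ omegaPow ({w} : Set (List X)), w ≠ [] ∧ ∀ k, ξ ∈ cyl (blk (fun _ => w) k) := by
    rintro ξ ⟨f, hf, hk⟩
    have : f = fun _ => w := funext fun i => (hf i).1
    subst this
    exact ⟨(hf 0).2, hk⟩
  intro ξ hξ η hη
  obtain ⟨hw, h1⟩ := aux ξ hξ
  obtain ⟨-, h2⟩ := aux η hη
  funext i
  have hl := blk_length (fun _ => w) (fun _ => hw) (i + 1)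
  rw [(mem_cyl_iff _ _).1 (h1 (i + 1)) i hl, (mem_cyl_iff _ _).1 (h2 (i + 1)) i hl]

theorem per_reg (w : List X) : IsRegOmega (omegaPow ({w} : Set (List X))) := by
  refine ⟨1, fun _ => ({[]} : Set (List X)), fun _ => ({w} : Set (List X)),
    fun _ => ⟨.finite _ (Set.finite_singleton _), .finite _ (Set.finite_singleton _)⟩, ?_⟩
  ext ξ
  simp only [Set.mem_iUnion]
  constructor
  · intro h
    exact ⟨0, [], rfl, ξ, h, rfl⟩
  · rintro ⟨_, u, hu, η, hη, rfl⟩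
    have : u = [] := hu
    subst this
    exact hη

theorem stmt15 {X : Type} [Fintype X] (hX : 2 ≤ Fintype.card X) :
    ∃ G : ℕ → Set (ℕ → X), (∀ i, HasABP (G i)) ∧ ¬ HasABP (⋃ i, G i) := by
  have : Nontrivial X := Fintype.one_lt_card_iff_nontrivial.1 hX
  obtain ⟨e, he⟩ := exists_surjective_nat (List X)
  have hm : ∀ i, @IsMeagre _ (cantorTop X) (omegaPow ({e i} : Set (List X))) :=
    fun i => meagre_subsingleton _ (per_subsingleton _)
  refine ⟨fun i => omegaPow ({e i} : Set (List X)), fun i => ?_, ?_⟩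
  · refine ⟨∅, _, ⟨0, fun _ => 0, fun _ => 0, fun i => i.elim0, by simp⟩,
      @isOpen_empty _ (cantorTop X), per_reg (e i), hm i, ?_⟩
    intro x hx
    rcases hx with h | h
    · exact h.1
    · exact absurd h.1 (Set.notMem_empty x)
  · rintro ⟨E, F, -, hEo, hFr, hFm, hsub⟩
    have hE : E = ∅ := by
      by_contra hne
      let : TopologicalSpace X := ⊥
      have : DiscreteTopology X := ⟨rfl⟩
      have hm' : ∀ i, IsMeagre (omegaPow ({e i} : Set (List X))) := hm
      have hFm' : IsMeagre F := hFm
      have hu : IsMeagre (F ∪ ⋃ i, omegaPow ({e i} : Set (List X))) :=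
        hFm'.union (isMeagre_iUnion hm')
      refine not_isMeagre_of_isOpen (s := E) hEo (Set.nonempty_iff_ne_empty.2 hne) (hu.mono ?_)
      intro x hx
      by_cases h : x ∈ ⋃ i, omegaPow ({e i} : Set (List X))
      · exact Or.inr h
      · exact Or.inl (hsub (Or.inr ⟨hx, h⟩))
    subst hE
    refine per_not_all F hFr hFm fun w => ?_
    obtain ⟨i, rfl⟩ := he w
    intro x hx
    exact hsub (Or.inl ⟨Set.mem_iUnion.2 ⟨i, hx⟩, Set.notMem_empty x⟩)

end AutoBaire
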